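/- Let A be the free associative superalgebra over Z on homogeneous generators with superbracket [a,b] = ab - (-1)^{|a||b|} ba, let L be the Lie sub-superalgebra generated by the generators, and let C be a complete set of basic commutators. Then the set C ∪ {[c,c] : c ∈ C is odd} is linearly independent over Z. -/

import Mathlib

/-- The weight (number of leaves) of a formal bracketing. -/
def FreeMagma.wt {A : Type*} : FreeMagma A → ℕ
  | .of _ => 1
  | .mul s t => s.wt + t.wt

/-- A complete set of basic commutators (as formal bracketings) on an ordered set `A`,
in the sense of P. Hall: the set `B` together with a linear order `le` on it which
extends the order of the generators, places commutators of smaller weight first,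
and such that `[c,d] ∈ B` iff `c, d ∈ B`, `c > d`, and whenever `c = [e,f]`
one has `f ≤ d`. -/
structure HallData (A : Type*) [LinearOrder A] where
  B : Set (FreeMagma A)
  le : FreeMagma A → FreeMagma A → Prop
  le_refl : ∀ t ∈ B, le t t
  le_trans : ∀ s ∈ B, ∀ t ∈ B, ∀ u ∈ B, le s t → le t u → le s u
  le_antisymm : ∀ s ∈ B, ∀ t ∈ B, le s t → le t s → s = t
  le_total : ∀ s ∈ B, ∀ t ∈ B, le s t ∨ le t s
  wt_mono : ∀ s ∈ B, ∀ t ∈ B, s.wt < t.wt → le s t ∧ s ≠ t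
  le_of : ∀ a b : A, le (.of a) (.of b) ↔ a ≤ b
  of_mem : ∀ a : A, FreeMagma.of a ∈ B
  mul_mem : ∀ s t : FreeMagma A, FreeMagma.mul s t ∈ B ↔
    s ∈ B ∧ t ∈ B ∧ (le t s ∧ t ≠ s) ∧ ∀ e f, s = FreeMagma.mul e f → le f t

/-- The `ℤ/2`-degree of a formal bracketing, given degrees of the generators. -/
def degm {A : Type*} (deg : A → ZMod 2) : FreeMagma A → ZMod 2
  | .of a => deg a
  | .mul s t => degm deg s + degm deg t

/-- Evaluation of a formal bracketing in the free associative superalgebra over `ℤ`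
via the superbracket `[a,b] = ab - (-1)^{|a||b|} ba`. -/
def evalA {A : Type*} (deg : A → ZMod 2) : FreeMagma A → FreeAlgebra ℤ A
  | .of a => FreeAlgebra.ι ℤ a
  | .mul s t => evalA deg s * evalA deg t -
      ((-1 : ℤ) ^ ((degm deg s).val * (degm deg t).val)) • (evalA deg t * evalA deg s)

namespace HallAux

open FreeAlgebra

variable {A : Type*}

/-- The sign `(-1)^{|s||t|}`. -/
def sg (deg : A → ZMod 2) (s t : FreeMagma A) : ℤ :=
  (-1 : ℤ) ^ ((degm deg s).val * (degm deg t).val)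

/-- Evaluation on the free algebra on all bracketings. -/
noncomputable def E (deg : A → ZMod 2) : FreeAlgebra ℤ (FreeMagma A) →ₐ[ℤ] FreeAlgebra ℤ A :=
  FreeAlgebra.lift ℤ (evalA deg)

/-- `t ↦ [[t, D t], [0, σ t]]`, where `D` is the skew derivation `[-, x]`. -/
noncomputable def M (deg : A → ZMod 2) (x : FreeMagma A) :
    FreeAlgebra ℤ (FreeMagma A) →ₐ[ℤ] Matrix (Fin 2) (Fin 2) (FreeAlgebra ℤ (FreeMagma A)) :=
  FreeAlgebra.lift ℤ (fun y => !![ι ℤ y, ι ℤ (FreeMagma.mul y x); 0, sg deg y x • ι ℤ y])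

lemma M_struct (deg : A → ZMod 2) (x : FreeMagma A) (t : FreeAlgebra ℤ (FreeMagma A)) :
    M deg x t 0 0 = t ∧ M deg x t 1 0 = 0 := by
  induction t using FreeAlgebra.induction with
  | grade0 r =>
    rw [AlgHom.commutes]
    simp [Matrix.algebraMap_matrix_apply]
  | grade1 y => simp [M]
  | mul a b ha hb =>
    simp [Matrix.mul_apply, Fin.sum_univ_two, ha.1, ha.2, hb.1, hb.2]
  | add a b ha hb => simp [ha.1, ha.2, hb.1, hb.2]

/-- The skew derivation. -/
noncomputable def D (deg : A → ZMod 2) (x : FreeMagma A) :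
    FreeAlgebra ℤ (FreeMagma A) →ₗ[ℤ] FreeAlgebra ℤ (FreeMagma A) where
  toFun t := M deg x t 0 1
  map_add' a b := by simp
  map_smul' a b := by
    simp only [zsmul_eq_mul, map_mul, map_intCast, eq_intCast, Int.cast_id]
    rw [← zsmul_eq_mul, Matrix.smul_apply, zsmul_eq_mul]

lemma D_mul_ι (deg : A → ZMod 2) (x y : FreeMagma A) (t : FreeAlgebra ℤ (FreeMagma A)) :
    D deg x (t * ι ℤ y) = t * ι ℤ (FreeMagma.mul y x) + sg deg y x • (D deg x t * ι ℤ y) := by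
  have h := M_struct deg x t
  show M deg x (t * ι ℤ y) 0 1 = t * _ + _ • (M deg x t 0 1 * _)
  rw [map_mul, Matrix.mul_apply, Fin.sum_univ_two, h.1]
  have h1 : M deg x (ι ℤ y) = !![ι ℤ y, ι ℤ (FreeMagma.mul y x); 0, sg deg y x • ι ℤ y] := by
    simp only [M, FreeAlgebra.lift_ι_apply]
  rw [h1]
  generalize M deg x t 0 1 = z
  show t * ι ℤ (FreeMagma.mul y x) + z * (sg deg y x • ι ℤ y) = _
  rw [mul_smul_comm]

open Classical in
/-- The right action. -/
noncomputable def act (deg : A → ZMod 2) (x : FreeMagma A) :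
    FreeAlgebra ℤ (FreeMagma A) →ₐ[ℤ] (Module.End ℤ (FreeAlgebra ℤ (FreeMagma A)))ᵐᵒᵖ :=
  FreeAlgebra.lift ℤ (fun y => MulOpposite.op
    (if y = x then D deg x else LinearMap.mulRight ℤ (ι ℤ y)))

/-- Evaluation of the right action at `1`. -/
noncomputable def θ (deg : A → ZMod 2) (x : FreeMagma A) :
    FreeAlgebra ℤ (FreeMagma A) →ₗ[ℤ] FreeAlgebra ℤ (FreeMagma A) where
  toFun u := (act deg x u).unop 1
  map_add' a b := by simp
  map_smul' a b := by
    have := map_zsmul (act deg x b).unop a 1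
    simpa using this

/-- The elements of `G` evaluate to free generators, in a strong sense. -/
def P (deg : A → ZMod 2) (G : Set (FreeMagma A)) : Prop :=
  ∃ ρ : FreeAlgebra ℤ A →ₗ[ℤ] FreeAlgebra ℤ (FreeMagma A),
    ∀ q ∈ Algebra.adjoin ℤ (ι ℤ '' G), ρ (E deg q) = q

lemma P_base (deg : A → ZMod 2) (G : Set (FreeMagma A))
    (hG : ∀ d ∈ G, ∃ a, d = FreeMagma.of a) : P deg G := by
  let f : FreeAlgebra ℤ A →ₐ[ℤ] FreeAlgebra ℤ (FreeMagma A) :=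
    FreeAlgebra.lift ℤ (fun a => ι ℤ (FreeMagma.of a))
  refine ⟨f.toLinearMap, fun q hq => ?_⟩
  show f (E deg q) = q
  induction hq using Algebra.adjoin_induction with
  | mem x hx =>
    obtain ⟨d, hd, rfl⟩ := hx
    obtain ⟨a, rfl⟩ := hG d hd
    simp [E, f, evalA]
  | algebraMap r => simp
  | add a b _ _ ha hb => simp [ha, hb]
  | mul a b _ _ ha hb => simp [ha, hb]

lemma P_step (deg : A → ZMod 2) (G G' : Set (FreeMagma A)) (x : FreeMagma A) (hx : x ∈ G)
    (hG : ∀ d ∈ G', (d ∈ G ∧ d ≠ x) ∨ ∃ e ∈ G', d = FreeMagma.mul e x) (h : P deg G) :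
    P deg G' := by
  obtain ⟨ρ, hρ⟩ := h
  have key : ∀ d ∈ G', ∃ q ∈ Algebra.adjoin ℤ (ι ℤ '' G), E deg q = evalA deg d ∧
      act deg x q = MulOpposite.op (LinearMap.mulRight ℤ (ι ℤ d)) := by
    intro d
    induction d using FreeMagma.rec with
    | of a =>
      intro hd
      rcases hG _ hd with ⟨h1, h2⟩ | ⟨e, _, h2⟩
      · exact ⟨ι ℤ _, Algebra.subset_adjoin ⟨_, h1, rfl⟩, by simp [E], by simp [act, h2]⟩
      · cases h2
    | mul s t ihs iht =>
      intro hd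
      rcases hG _ hd with ⟨h1, h2⟩ | ⟨e, he, h2⟩
      · exact ⟨ι ℤ _, Algebra.subset_adjoin ⟨_, h1, rfl⟩, by simp [E], by
          simp only [act, FreeAlgebra.lift_ι_apply]; rw [if_neg h2]⟩
      · change FreeMagma.mul s t = _ at h2
        injection h2 with h2 h3
        subst h2 h3
        obtain ⟨q, hq, hq1, hq2⟩ := ihs he
        have hxm : ι ℤ t ∈ Algebra.adjoin ℤ (ι ℤ '' G) := Algebra.subset_adjoin ⟨_, hx, rfl⟩
        refine ⟨q * ι ℤ t - sg deg s t • (ι ℤ t * q), ?_, ?_, ?_⟩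
        · exact Subalgebra.sub_mem _ (Subalgebra.mul_mem _ hq hxm)
            (Subalgebra.smul_mem _ (Subalgebra.mul_mem _ hxm hq) _)
        · rw [map_sub, map_smul, map_mul, map_mul, hq1]
          simp [E, evalA, sg]
        · have ht : act deg t (ι ℤ t) = MulOpposite.op (D deg t) := by simp [act]
          rw [map_sub, map_smul, map_mul, map_mul, hq2, ht]
          apply MulOpposite.unop_injective
          refine LinearMap.ext fun u => ?_
          have := D_mul_ι deg t s u
          change D deg t (u * ι ℤ s) - sg deg s t • (D deg t u * ι ℤ s) =
            u * ι ℤ (FreeMagma.mul s t)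
          rw [this]; abel
  refine ⟨(θ deg x).comp ρ, fun q hq => ?_⟩
  have key2 : ∃ q' ∈ Algebra.adjoin ℤ (ι ℤ '' G), E deg q' = E deg q ∧
      act deg x q' = MulOpposite.op (LinearMap.mulRight ℤ q) := by
    induction hq using Algebra.adjoin_induction with
    | mem y hy =>
      obtain ⟨d, hd, rfl⟩ := hy
      obtain ⟨q, h1, h2, h3⟩ := key d hd
      exact ⟨q, h1, by rw [h2]; simp [E], h3⟩
    | algebraMap r =>
      refine ⟨algebraMap _ _ r, Subalgebra.algebraMap_mem _ _, rfl, ?_⟩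
      rw [AlgHom.commutes]
      apply MulOpposite.unop_injective
      refine LinearMap.ext fun u => ?_
      change r • u = u * algebraMap _ _ r
      rw [← Algebra.commutes]; simp
    | add a b _ _ ha hb =>
      obtain ⟨a', h1, h2, h3⟩ := ha
      obtain ⟨b', k1, k2, k3⟩ := hb
      refine ⟨a' + b', Subalgebra.add_mem _ h1 k1, by simp [h2, k2], ?_⟩
      rw [map_add, h3, k3]
      apply MulOpposite.unop_injective
      refine LinearMap.ext fun u => ?_
      exact (mul_add u a b).symm
    | mul a b _ _ ha hb =>
      obtain ⟨a', h1, h2, h3⟩ := ha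
      obtain ⟨b', k1, k2, k3⟩ := hb
      refine ⟨a' * b', Subalgebra.mul_mem _ h1 k1, by simp [h2, k2], ?_⟩
      rw [map_mul, h3, k3]
      apply MulOpposite.unop_injective
      refine LinearMap.ext fun u => ?_
      exact mul_assoc u a b
  obtain ⟨q', h1, h2, h3⟩ := key2
  show θ deg x (ρ (E deg q)) = q
  rw [← h2, hρ q' h1]
  show (act deg x q').unop 1 = q
  rw [h3]
  simp

/-- The finset of subtrees. -/
def sub : FreeMagma A → Set (FreeMagma A)
  | .of a => {FreeMagma.of a}
  | .mul s t => {FreeMagma.mul s t} ∪ (sub s ∪ sub t)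

lemma sub_finite (t : FreeMagma A) : (sub t).Finite := by
  induction t using FreeMagma.rec with
  | of a => exact Set.finite_singleton _
  | mul s t hs ht => exact (Set.finite_singleton _).union (hs.union ht)

lemma self_mem_sub (t : FreeMagma A) : t ∈ sub t := by
  cases t with
  | of a => exact rfl
  | mul s t => exact Or.inl rfl

lemma sub_closed (t s u : FreeMagma A) (h : FreeMagma.mul s u ∈ sub t) :
    s ∈ sub t ∧ u ∈ sub t := by
  induction t using FreeMagma.rec with
  | of a => cases h
  | mul a b ha hb =>
    rcases h with h | h | h
    · change FreeMagma.mul s u = FreeMagma.mul a b at h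
      injection h with h1 h2
      subst h1 h2
      exact ⟨Or.inr (Or.inl (self_mem_sub _)), Or.inr (Or.inr (self_mem_sub _))⟩
    · exact ⟨Or.inr (Or.inl (ha h).1), Or.inr (Or.inl (ha h).2)⟩
    · exact ⟨Or.inr (Or.inr (hb h).1), Or.inr (Or.inr (hb h).2)⟩

lemma wt_pos (t : FreeMagma A) : 0 < t.wt := by
  induction t using FreeMagma.rec with
  | of a => exact Nat.one_pos
  | mul s t hs ht => exact Nat.add_pos_left hs _

variable [LinearOrder A]

open Classical in
/-- The linear order on the basic commutators. -/
noncomputable instance ordB (H : HallData A) : LinearOrder H.B where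
  le s t := H.le s.1 t.1
  le_refl s := H.le_refl _ s.2
  le_trans s t u := H.le_trans _ s.2 _ t.2 _ u.2
  le_antisymm s t h1 h2 := Subtype.ext (H.le_antisymm _ s.2 _ t.2 h1 h2)
  le_total s t := H.le_total _ s.2 _ t.2
  toDecidableLE := Classical.decRel _

lemma mul_facts (H : HallData A) {s t : FreeMagma A} (h : FreeMagma.mul s t ∈ H.B) :
    ∃ (hs : s ∈ H.B) (ht : t ∈ H.B), (⟨t, ht⟩ : H.B) < ⟨s, hs⟩ ∧
      (⟨t, ht⟩ : H.B) < ⟨FreeMagma.mul s t, h⟩ ∧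
      ∀ e f, s = FreeMagma.mul e f → ∀ hf : f ∈ H.B, (⟨f, hf⟩ : H.B) ≤ ⟨t, ht⟩ := by
  obtain ⟨hs, ht, ⟨h1, h2⟩, h3⟩ := (H.mul_mem s t).1 h
  refine ⟨hs, ht, lt_of_le_of_ne h1 (fun h => h2 (congrArg Subtype.val h)), ?_,
    fun e f hh _ => h3 e f hh⟩
  have := H.wt_mono t ht _ h (by have := wt_pos s; show t.wt < s.wt + t.wt; omega)
  exact lt_of_le_of_ne this.1 (fun h => this.2 (congrArg Subtype.val h))

/-- The free generators after eliminating `F`. -/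
def G (H : HallData A) (U F : Set H.B) : Set (FreeMagma A) :=
  {d | ∃ hd : d ∈ H.B, (⟨d, hd⟩ : H.B) ∈ U ∧ (⟨d, hd⟩ : H.B) ∉ F ∧
    ∀ e f, d = FreeMagma.mul e f → ∃ hf : f ∈ H.B, (⟨f, hf⟩ : H.B) ∈ F}

/-- Closure under subtrees. -/
def Cl (H : HallData A) (U : Set H.B) : Prop :=
  ∀ d ∈ U, ∀ e f, d.1 = FreeMagma.mul e f → ∀ (he : e ∈ H.B) (hf : f ∈ H.B),
    (⟨e, he⟩ : H.B) ∈ U ∧ (⟨f, hf⟩ : H.B) ∈ U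

lemma P_all (deg : A → ZMod 2) (H : HallData A) (U : Set H.B) (hU : Cl H U) (F : Finset H.B) :
    (F : Set H.B) ⊆ U → (∀ u ∈ U, ∀ z ∈ F, u ≤ z → u ∈ F) → P deg (G H U F) := by
  induction F using Finset.induction_on_max with
  | empty =>
    intro _ _
    apply P_base
    rintro d ⟨hd, h1, h2, h3⟩
    cases d with
    | of a => exact ⟨a, rfl⟩
    | mul s t =>
      obtain ⟨_, h⟩ := h3 s t rfl
      simp at h
  | insert x F hlt ih =>
    intro hFU hdown
    have hxU : x ∈ U := hFU (by simp)
    have hdown' : ∀ u ∈ U, u ≤ x → u ∈ insert x F := fun u hu h =>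
      hdown u hu x (by simp) h
    have hdF : ∀ u ∈ U, u < x → u ∈ F := fun u hu h =>
      (Finset.mem_insert.1 (hdown' u hu h.le)).resolve_left h.ne
    have hle : ∀ u ∈ insert x F, u ≤ x := fun u hu => by
      rcases Finset.mem_insert.1 hu with rfl | h
      · exact le_rfl
      · exact (hlt u h).le
    refine P_step deg (G H U F) _ x.1 ?_ ?_ (ih (fun u hu => hFU (by simp at hu ⊢; exact Or.inr hu))
      (fun u hu z hz huz => hdF u hu (huz.trans_lt (hlt z hz))))
    · refine ⟨x.2, hxU, fun h => lt_irrefl _ (hlt x h), fun e f hef => ?_⟩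
      obtain ⟨x, hxB⟩ := x
      subst hef
      obtain ⟨he, hf, h1, h2, h3⟩ := mul_facts H hxB
      exact ⟨hf, hdF _ (hU _ hxU e f rfl he hf).2 h2⟩
    · rintro d ⟨hd, hdU, hdn, hdd⟩
      have hdx : d ≠ x.1 := by
        rintro rfl
        exact hdn (by simp)
      have hdnF : (⟨d, hd⟩ : H.B) ∉ (F : Set H.B) := fun h => hdn (by simp at h ⊢; exact Or.inr h)
      cases d with
      | of a => exact Or.inl ⟨⟨hd, hdU, hdnF, fun e f h => by cases h⟩, hdx⟩
      | mul s t =>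
        change FreeMagma.mul s t ∈ H.B at hd
        obtain ⟨hs, ht, h1, h2, h3⟩ := mul_facts H hd
        obtain ⟨_, htF⟩ := hdd s t rfl
        rcases Finset.mem_insert.1 (Finset.mem_coe.1 htF) with htx | htF
        · right
          refine ⟨s, ⟨hs, (hU _ hdU s t rfl hs ht).1, fun h => ?_, fun e f hef => ?_⟩, ?_⟩
          · have := hle _ (Finset.mem_coe.1 h)
            rw [htx] at h1
            exact absurd h1 (not_lt.2 this)
          · subst hef
            obtain ⟨he, hf, _⟩ := mul_facts H hs
            refine ⟨hf, ?_⟩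
            have := h3 e f rfl hf
            rw [htx] at this
            exact hdown' _ (hU _ (hU _ hdU _ t rfl hs ht).1 e f rfl he hf).2 this
          · rw [← htx]
        · left
          refine ⟨⟨hd, hdU, hdnF, fun e f h => ?_⟩, hdx⟩
          change FreeMagma.mul s t = _ at h
          injection h with h4 h5
          subst h5
          exact ⟨ht, htF⟩

open Polynomial in
/-- A functional separating the smallest commutator from the later ones. -/
lemma exists_functional (deg : A → ZMod 2) (H : HallData A) (U : Set H.B) (hfin : U.Finite)
    (hU : Cl H U) (c : H.B) :
    ∃ Ψ : FreeAlgebra ℤ A →ₗ[ℤ] ℤ[X], ∀ d ∈ U, c ≤ d →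
      Ψ (evalA deg d.1) = (if d = c then X else 0) ∧
      (degm deg d.1 = 1 → Ψ (evalA deg (FreeMagma.mul d.1 d.1)) =
        if d = c then 2 * X ^ 2 else 0) := by
  classical
  let F : Finset H.B := hfin.toFinset.filter (· < c)
  have hF : ∀ u, u ∈ F ↔ u ∈ U ∧ u < c := fun u => by simp [F]
  obtain ⟨ρ, hρ⟩ := P_all deg H U hU F (fun u hu => ((hF u).1 hu).1)
    (fun u hu z hz huz => (hF u).2 ⟨hu, huz.trans_lt ((hF z).1 hz).2⟩)
  let π : FreeAlgebra ℤ (FreeMagma A) →ₐ[ℤ] ℤ[X] :=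
    FreeAlgebra.lift ℤ (fun y => if y = c.1 then X else 0)
  have key : ∀ (d : FreeMagma A) (hd : d ∈ H.B), (⟨d, hd⟩ : H.B) ∈ U → c ≤ ⟨d, hd⟩ →
      ∃ q ∈ Algebra.adjoin ℤ (ι ℤ '' G H U F), E deg q = evalA deg d ∧
        π q = if d = c.1 then X else 0 := by
    intro d
    induction d using FreeMagma.rec with
    | of a =>
      intro hd hdU hc
      refine ⟨ι ℤ _, Algebra.subset_adjoin ⟨_, ⟨hd, hdU, ?_, fun e f h => by cases h⟩, rfl⟩,
        by simp [E], by simp [π]⟩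
      exact fun h => absurd ((hF _).1 h).2 (not_lt.2 hc)
    | mul s t ihs iht =>
      intro hd hdU hc
      change FreeMagma.mul s t ∈ H.B at hd
      obtain ⟨hs, ht, h1, h2, h3⟩ := mul_facts H hd
      by_cases htF : (⟨t, ht⟩ : H.B) ∈ F
      · refine ⟨ι ℤ _, Algebra.subset_adjoin ⟨_, ⟨hd, hdU, ?_, fun e f h => ?_⟩, rfl⟩,
          by simp [E], by simp [π]⟩
        · exact fun h => absurd ((hF _).1 h).2 (not_lt.2 hc)
        · injection h with h4 h5
          subst h5
          exact ⟨ht, htF⟩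
      · obtain ⟨hsU, htU⟩ := hU _ hdU s t rfl hs ht
        have htc : c ≤ ⟨t, ht⟩ := by
          by_contra hh
          exact htF ((hF _).2 ⟨htU, not_le.1 hh⟩)
        obtain ⟨q, hq, hq1, hq2⟩ := ihs hs hsU (htc.trans h1.le)
        obtain ⟨r, hr, hr1, hr2⟩ := iht ht htU htc
        have hsc : s ≠ c.1 := by
          rintro rfl
          exact absurd h1 (not_lt.2 htc)
        have hdc : FreeMagma.mul s t ≠ c.1 := by
          intro h
          have : c = ⟨FreeMagma.mul s t, hd⟩ := Subtype.ext h.symm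
          rw [← this] at h2
          exact absurd h2 (not_lt.2 htc)
        rw [if_neg hsc] at hq2
        refine ⟨q * r - sg deg s t • (r * q), ?_, ?_, ?_⟩
        · exact Subalgebra.sub_mem _ (Subalgebra.mul_mem _ hq hr)
            (Subalgebra.smul_mem _ (Subalgebra.mul_mem _ hr hq) _)
        · rw [map_sub, map_smul, map_mul, map_mul, hq1, hr1]
          rfl
        · rw [map_sub, map_smul, map_mul, map_mul, hq2, if_neg hdc]
          simp
  refine ⟨π.toLinearMap.comp ρ, fun d hdU hcd => ?_⟩
  obtain ⟨q, hq, hq1, hq2⟩ := key d.1 d.2 hdU hcd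
  simp only [← Subtype.ext_iff] at hq2
  constructor
  · rw [← hq1]
    show π (ρ (E deg q)) = _
    rw [hρ q hq, hq2]
  · intro hodd
    have : evalA deg (FreeMagma.mul d.1 d.1) = E deg ((2 : ℤ) • (q * q)) := by
      rw [map_smul, map_mul, hq1]
      have h1 : (1 : ZMod 2).val = 1 := rfl
      simp only [evalA, hodd, h1]
      rw [two_smul]
      simp
    rw [this]
    show π (ρ (E deg _)) = _
    rw [hρ _ (zsmul_mem (Subalgebra.mul_mem _ hq hq) _), map_zsmul, map_mul, hq2]
    split_ifs
    · rw [zsmul_eq_mul]; push_cast; ring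
    · simp

end HallAux

open HallAux Polynomial in
theorem basic_aux {A : Type*} [LinearOrder A]
    (deg : A → ZMod 2) (H : HallData A) :
    LinearIndependent ℤ
      (Sum.elim
        (fun t : {t : FreeMagma A // t ∈ H.B} => evalA deg t.1)
        (fun t : {t : FreeMagma A // t ∈ H.B ∧ degm deg t = 1} =>
          evalA deg (FreeMagma.mul t.1 t.1))) := by
  classical
  rw [linearIndependent_iff']
  intro s g hsum
  let p : {t : FreeMagma A // t ∈ H.B} ⊕ {t : FreeMagma A // t ∈ H.B ∧ degm deg t = 1} → H.B :=
    Sum.elim id (fun t => ⟨t.1, t.2.1⟩)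
  by_contra hne
  push Not at hne
  obtain ⟨i0, hi0, hgi0⟩ := hne
  let s' := s.filter (fun i => g i ≠ 0)
  obtain ⟨m, hm, hmin⟩ := Finset.exists_min_image s' p ⟨i0, by simp [s', hi0, hgi0]⟩
  have hm' : m ∈ s ∧ g m ≠ 0 := by simpa [s'] using hm
  let U : Set H.B := {d | ∃ i ∈ s, d.1 ∈ sub (p i).1}
  have hUfin : U.Finite := by
    have : (⋃ i ∈ s, sub (p i).1).Finite :=
      s.finite_toSet.biUnion (fun i _ => sub_finite _)
    refine (this.preimage Subtype.val_injective.injOn).subset ?_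
    rintro d ⟨i, hi, hd⟩
    simp only [Set.mem_preimage, Set.mem_iUnion]
    exact ⟨i, hi, hd⟩
  have hUcl : Cl H U := by
    rintro d ⟨i, hi, hd⟩ e f hef he hf
    rw [hef] at hd
    exact ⟨⟨i, hi, (sub_closed _ _ _ hd).1⟩, ⟨i, hi, (sub_closed _ _ _ hd).2⟩⟩
  obtain ⟨Ψ, hΨ⟩ := exists_functional deg H U hUfin hUcl (p m)
  have hmem : ∀ i ∈ s, p i ∈ U := fun i hi => ⟨i, hi, self_mem_sub _⟩
  have h0 := congrArg Ψ hsum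
  rw [map_sum, map_zero] at h0
  have hval : ∀ i ∈ s, g i ≠ 0 → Ψ (Sum.elim
        (fun t : {t : FreeMagma A // t ∈ H.B} => evalA deg t.1)
        (fun t : {t : FreeMagma A // t ∈ H.B ∧ degm deg t = 1} =>
          evalA deg (FreeMagma.mul t.1 t.1)) i) =
      if p i = p m then (if i.isLeft then X else 2 * X ^ 2) else 0 := by
    intro i hi hgi
    have h := hΨ (p i) (hmem i hi) (hmin i (by simp [s', hi, hgi]))
    rcases i with t | t
    · exact h.1
    · exact h.2 t.2.2
  have hcoef := congrArg (fun q : ℤ[X] => q.coeff (if m.isLeft then 1 else 2)) h0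
  simp only [finsetSum_coeff, coeff_zero] at hcoef
  rw [Finset.sum_eq_single m] at hcoef
  · rw [map_smul, hval m hm'.1 hm'.2] at hcoef
    apply hm'.2
    rcases m with t | t
    · simpa using hcoef
    · simpa [coeff_ofNat_mul] using hcoef
  · intro i hi him
    by_cases hgi : g i = 0
    · simp [hgi]
    rw [map_smul, hval i hi hgi, coeff_smul]
    by_cases h1 : p i = p m
    · rw [if_pos h1]
      clear hval hcoef hmem h0 hΨ hmin hsum
      rcases i with t | t <;> rcases m with u | u
      · exact absurd (congrArg Sum.inl h1) him
      · simp [coeff_X]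
      · simp [coeff_ofNat_mul, coeff_X_pow]
      · have h2 : t.1 = u.1 := congrArg (fun z : H.B => z.1) h1
        exact absurd (congrArg Sum.inr (Subtype.ext h2)) him
    · rw [if_neg h1]; simp
  · intro h
    exact absurd hm'.1 h

/-- In the free associative superalgebra over `ℤ` on homogeneous generators with the
superbracket, if `C` is a complete set of basic commutators then the family
`C ∪ {[c,c] : c ∈ C odd}` is linearly independent over `ℤ`. (Note
`evalA deg (t.mul t) = [c,c]` where `c` is the value of `t`.) -/
theorem basic_commutators_linearIndependent {A : Type*} [LinearOrder A]
    (deg : A → ZMod 2) (H : HallData A) :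
    LinearIndependent ℤ
      (Sum.elim
        (fun t : {t : FreeMagma A // t ∈ H.B} => evalA deg t.1)
        (fun t : {t : FreeMagma A // t ∈ H.B ∧ degm deg t = 1} =>
          evalA deg (FreeMagma.mul t.1 t.1))) := by
  exact basic_aux deg H
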